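/- For every Cayley tree T labelled with [n]_0, the waiting time of T equals the number of probes of its preference sequence, and the number of priority small ascents of T equals the number of lucky cars of its preference sequence: wait(T) = probes(π_T) and psa(T) = lucky(π_T). -/

import Mathlib

/-!
Write `p = wearyInv` for the visiting time. The theorem rests on the fact that car `c` of the
preference sequence parks exactly at spot `p c` (`spot_pref`). By strong induction, the cars before
`c` occupy the spots `p 1, …, p (c - 1)`, so `p c` is free, and it exceeds `p (f c)` since a parent
is visited before its children. At every time `s` with `p (f c) < s < p c` the vertex `c` was
available but not chosen, so the vertex visited at time `s` is smaller than `c`, and spot `s` is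
already taken. Hence `p c` is the first free spot from the preference `p (f c) + 1` on.

Since the search visits every vertex exactly once, `i ↦ weary i` is a bijection of `{1,…,n}` with
inverse `p`. Reindexing along it turns `i - prioParent i` into `p c - p (f c)`, which is one more than
the displacement of car `c`; both identities follow.
-/

open scoped Classical

namespace WearyParking

/-- `f` is the parent function of a Cayley tree on `{0,…,n}` rooted at `0`:
`f 0 = 0`, `f` is pinned to `0` outside `{1,…,n}`, `f` maps `{1,…,n}` into `{0,…,n}`,
and every vertex reaches the root under iteration. -/
def IsCayleyTree (n : ℕ) (f : ℕ → ℕ) : Prop :=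
  f 0 = 0 ∧ (∀ i, n < i → f i = 0) ∧
  (∀ i, 1 ≤ i → i ≤ n → f i ≤ n) ∧
  (∀ i, 1 ≤ i → i ≤ n → ∃ k, f^[k] i = 0)

/-- A non-root vertex `i` is a record of the tree if it is greater than
all of its ancestors. -/
def IsRecord (n : ℕ) (f : ℕ → ℕ) (i : ℕ) : Prop :=
  1 ≤ i ∧ i ≤ n ∧ ∀ k, 1 ≤ k → f^[k] i < i

/-- The smallest record larger than `i`. -/
noncomputable def nextRecord (n : ℕ) (f : ℕ → ℕ) (i : ℕ) : ℕ :=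
  sInf {j | IsRecord n f j ∧ i < j}

/-- The record (blob) code of the tree, a function on `{1,…,n-1}`:
at a non-record position it records the parent, and at a record position it
records the parent of the next record. -/
noncomputable def blob (n : ℕ) (f : ℕ → ℕ) (i : ℕ) : ℕ :=
  if IsRecord n f i then f (nextRecord n f i) else f i

/-- Number of children of vertex `v` in the tree. -/
def numChildren (n : ℕ) (f : ℕ → ℕ) (v : ℕ) : ℕ :=
  ((Finset.Icc 1 n).filter fun i => f i = v).card

/-- The list of the first `i+1` vertices visited by the priority-first search:
start at the root `0`; at each step visit the smallest unvisited vertex whose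
parent has been visited. -/
noncomputable def wearyList (n : ℕ) (f : ℕ → ℕ) : ℕ → List ℕ
  | 0 => [0]
  | (i + 1) =>
      wearyList n f i ++
        [sInf {v | 1 ≤ v ∧ v ≤ n ∧ v ∉ wearyList n f i ∧ f v ∈ wearyList n f i}]

/-- The weary permutation of the tree: `weary n f i` is the `i`-th vertex visited
by the priority-first search (with `weary n f 0 = 0`). -/
noncomputable def weary (n : ℕ) (f : ℕ → ℕ) (i : ℕ) : ℕ :=
  (wearyList n f n).getD i 0

/-- The inverse of the weary permutation. -/
noncomputable def wearyInv (n : ℕ) (f : ℕ → ℕ) (v : ℕ) : ℕ :=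
  sInf {i | weary n f i = v}

/-- The preference sequence `π_T` of the tree: `π_T i = ω_T⁻¹ (f_T i) + 1`. -/
noncomputable def pref (n : ℕ) (f : ℕ → ℕ) (i : ℕ) : ℕ :=
  wearyInv n f (f i) + 1

/-- Parent function of the priority tree `pt(T)`: `ω_T⁻¹ ∘ f_T ∘ ω_T`. -/
noncomputable def prioParent (n : ℕ) (f : ℕ → ℕ) (i : ℕ) : ℕ :=
  wearyInv n f (f (weary n f i))

/-- The list of spots occupied by cars `1,…,c` in the classical parking process:
car `c` parks at the first spot `≥ π c` not occupied by an earlier car. -/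
noncomputable def spotList (π : ℕ → ℕ) : ℕ → List ℕ
  | 0 => []
  | (c + 1) => spotList π c ++ [sInf {s | π (c + 1) ≤ s ∧ s ∉ spotList π c}]

/-- The spot where car `c` ends up in the classical parking process. -/
noncomputable def spot (π : ℕ → ℕ) (c : ℕ) : ℕ :=
  (spotList π c).getD (c - 1) 0

/-- `π` is a parking function of length `n`: preferences lie in `{1,…,n}`
(pinned to `1` outside `{1,…,n}`) and every car parks within the `n` spots. -/
def IsParkingFun (n : ℕ) (π : ℕ → ℕ) : Prop :=
  (∀ c, 1 ≤ c → c ≤ n → 1 ≤ π c ∧ π c ≤ n) ∧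
  (∀ c, c = 0 ∨ n < c → π c = 1) ∧
  (∀ c, 1 ≤ c → c ≤ n → spot π c ≤ n)

/-- The bird's-eye permutation `ω_π`: the car parked at spot `i` (and `0` at `0`). -/
noncomputable def birdsEye (n : ℕ) (π : ℕ → ℕ) (i : ℕ) : ℕ :=
  if i = 0 then 0 else sInf {c | 1 ≤ c ∧ c ≤ n ∧ spot π c = i}

/-- The inverse of the bird's-eye permutation. -/
noncomputable def birdsEyeInv (n : ℕ) (π : ℕ → ℕ) (c : ℕ) : ℕ :=
  sInf {i | birdsEye n π i = c}

/-- Parent function of the parking tree `PT(π)`: `f_π i = ω_π (π i - 1)`. -/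
noncomputable def ptParent (n : ℕ) (π : ℕ → ℕ) (i : ℕ) : ℕ :=
  if 1 ≤ i ∧ i ≤ n then birdsEye n π (π i - 1) else 0

/-- `v` is a record of the parking function `π`, i.e. a left-to-right maximum of
the word `ω_π(1) ω_π(2) ⋯ ω_π(n)`. -/
def IsPfRecord (n : ℕ) (π : ℕ → ℕ) (v : ℕ) : Prop :=
  ∃ i, 1 ≤ i ∧ i ≤ n ∧ birdsEye n π i = v ∧ ∀ j, 1 ≤ j → j < i → birdsEye n π j < v

/-- The waiting time of the tree: `wait T = Σ_{i=1}^n (i - f_{pt(T)}(i))`. -/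
noncomputable def wait (n : ℕ) (f : ℕ → ℕ) : ℕ :=
  ∑ i ∈ Finset.Icc 1 n, (i - prioParent n f i)

/-- The number of priority small ascents of the tree. -/
noncomputable def psa (n : ℕ) (f : ℕ → ℕ) : ℕ :=
  ((Finset.Icc 1 n).filter fun i => prioParent n f i = i - 1).card

/-- The number of children of the root. -/
def degRoot (n : ℕ) (f : ℕ → ℕ) : ℕ := numChildren n f 0

/-- The children sequence: `chseq n f j` is the number of vertices with exactly
`j` children. -/
def chseq (n : ℕ) (f : ℕ → ℕ) (j : ℕ) : ℕ :=
  ((Finset.Icc 0 n).filter fun v => numChildren n f v = j).card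

/-- The number of probes of the parking function: `n` plus the total displacement. -/
noncomputable def probes (n : ℕ) (π : ℕ → ℕ) : ℕ :=
  n + ∑ c ∈ Finset.Icc 1 n, (spot π c - π c)

/-- The number of lucky cars of `π`: cars parking at their preferred spot. -/
noncomputable def lucky (n : ℕ) (π : ℕ → ℕ) : ℕ :=
  ((Finset.Icc 1 n).filter fun c => spot π c = π c).card

/-- The number of `1`s in `π`. -/
def ones (n : ℕ) (π : ℕ → ℕ) : ℕ :=
  ((Finset.Icc 1 n).filter fun c => π c = 1).card

/-- The multiplicity of the value `v` in the parking function `π`. -/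
def multIn (n : ℕ) (π : ℕ → ℕ) (v : ℕ) : ℕ :=
  ((Finset.Icc 1 n).filter fun c => π c = v).card

/-- The multiplicity sequence: `multSeq n π j` is the number of values in
`{1,…,n+1}` appearing exactly `j` times in `π`. -/
def multSeq (n : ℕ) (π : ℕ → ℕ) (j : ℕ) : ℕ :=
  ((Finset.Icc 1 (n + 1)).filter fun v => multIn n π v = j).card

/-- The tree is a path graph with endpoints `0` and `n`: every vertex has at most
one child and `n` is the (unique) leaf. -/
def IsPathTree (n : ℕ) (f : ℕ → ℕ) : Prop :=
  (∀ v, v ≤ n → numChildren n f v ≤ 1) ∧ numChildren n f n = 0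

/-- `g` is the parent map of a rooted forest on `{1,…,n}` rooted at `{1,…,k}`:
the vertices `1,…,k` are roots (fixed points), every other vertex of `{1,…,n}` has a
parent in `{1,…,n}`, every vertex reaches one of the roots under iteration, and `g`
is pinned to `0` outside `{1,…,n}`. -/
def IsForestRootedAt (n k : ℕ) (g : ℕ → ℕ) : Prop :=
  (∀ i, 1 ≤ i → i ≤ k → g i = i) ∧
  (∀ i, k < i → i ≤ n → 1 ≤ g i ∧ g i ≤ n) ∧
  (∀ i, 1 ≤ i → i ≤ n → ∃ m, 1 ≤ g^[m] i ∧ g^[m] i ≤ k) ∧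
  (∀ i, i = 0 ∨ n < i → g i = 0)

/-! ### The priority-first search -/

/-- The vertex visited at time `j`, read off the `j`-th stage of the search. It agrees with
`weary n f j` for `j ≤ n` and does not mention the final stage. -/
noncomputable def visit (n : ℕ) (f : ℕ → ℕ) (j : ℕ) : ℕ := (wearyList n f j).getD j 0

lemma length_wearyList (n : ℕ) (f : ℕ → ℕ) (i : ℕ) : (wearyList n f i).length = i + 1 := by
  induction i with
  | zero => simp [wearyList]
  | succ i ih => simp [wearyList, ih]

lemma getD_wearyList (n : ℕ) (f : ℕ → ℕ) (i j : ℕ) (h : j ≤ i) :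
    (wearyList n f i).getD j 0 = visit n f j := by
  induction i with
  | zero => obtain rfl : j = 0 := by omega
            rfl
  | succ i ih =>
    rcases Nat.lt_or_ge i j with hcmp | hcmp
    · obtain rfl : j = i + 1 := by omega
      rfl
    · rw [← ih hcmp, wearyList, List.getD_append]
      rw [length_wearyList]; omega

lemma visit_zero (n : ℕ) (f : ℕ → ℕ) : visit n f 0 = 0 := by simp [visit, wearyList]

lemma visit_succ (n : ℕ) (f : ℕ → ℕ) (i : ℕ) : visit n f (i + 1) =
    sInf {v | 1 ≤ v ∧ v ≤ n ∧ v ∉ wearyList n f i ∧ f v ∈ wearyList n f i} := by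
  rw [visit, wearyList, List.getD_append_right]
  · simp [length_wearyList]
  · rw [length_wearyList]

lemma mem_wearyList (n : ℕ) (f : ℕ → ℕ) (i v : ℕ) :
    v ∈ wearyList n f i ↔ ∃ j ≤ i, visit n f j = v := by
  induction i with
  | zero => simp [wearyList, visit_zero, eq_comm]
  | succ i ih =>
    rw [wearyList, List.mem_append, ih, List.mem_singleton, ← visit_succ]
    constructor
    · rintro (⟨j, hj, h⟩ | h)
      · exact ⟨j, by omega, h⟩
      · exact ⟨i + 1, le_rfl, h.symm⟩
    · rintro ⟨j, hj, h⟩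
      rcases Nat.lt_or_ge i j with hcmp | hcmp
      · obtain rfl : j = i + 1 := by omega
        exact Or.inr h.symm
      · exact Or.inl ⟨j, hcmp, h⟩

lemma weary_eq_visit {n : ℕ} {f : ℕ → ℕ} {i : ℕ} (h : i ≤ n) : weary n f i = visit n f i :=
  getD_wearyList n f n i h

/-- Before time `n` the search never gets stuck: climbing from an unvisited vertex towards the root
passes an unvisited vertex with a visited parent. This keeps the infimum in `wearyList` from taking
its default value on the empty set. -/
lemma exists_available {n : ℕ} {f : ℕ → ℕ} (hf : IsCayleyTree n f) {i : ℕ} (hi : i < n) :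
    ∃ v, 1 ≤ v ∧ v ≤ n ∧ v ∉ wearyList n f i ∧ f v ∈ wearyList n f i := by
  obtain ⟨hf0, -, hfn, hfr⟩ := hf
  have h0 : 0 ∈ wearyList n f i := (mem_wearyList ..).2 ⟨0, by omega, visit_zero n f⟩
  have climb : ∀ k v, v ≤ n → v ∉ wearyList n f i → f^[k] v = 0 →
      ∃ v, 1 ≤ v ∧ v ≤ n ∧ v ∉ wearyList n f i ∧ f v ∈ wearyList n f i := by
    intro k
    induction k with
    | zero => intro v _ hv h; exact absurd ((show v = 0 from h) ▸ h0) hv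
    | succ k ih =>
      intro v hvn hv h
      have hv1 : 1 ≤ v := by
        rcases Nat.eq_zero_or_pos v with rfl | h
        · exact absurd h0 hv
        · exact h
      by_cases hfv : f v ∈ wearyList n f i
      · exact ⟨v, hv1, hvn, hv, hfv⟩
      · exact ih (f v) (hfn v hv1 hvn) hfv h
  obtain ⟨v, hv, hvL⟩ : ∃ v ∈ Finset.range (n + 1), v ∉ (wearyList n f i).toFinset := by
    apply Finset.exists_mem_notMem_of_card_lt_card
    have := List.toFinset_card_le (wearyList n f i)
    rw [length_wearyList] at this
    rw [Finset.card_range]; omega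
  rw [List.mem_toFinset] at hvL
  rw [Finset.mem_range] at hv
  have hv1 : 1 ≤ v := by
    rcases Nat.eq_zero_or_pos v with rfl | h
    · exact absurd h0 hvL
    · exact h
  obtain ⟨k, hk⟩ := hfr v hv1 (by omega)
  exact climb k v (by omega) hvL hk

lemma visit_succ_spec {n : ℕ} {f : ℕ → ℕ} (hf : IsCayleyTree n f) {i : ℕ} (hi : i < n) :
    1 ≤ visit n f (i + 1) ∧ visit n f (i + 1) ≤ n ∧ visit n f (i + 1) ∉ wearyList n f i ∧
      f (visit n f (i + 1)) ∈ wearyList n f i := by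
  rw [visit_succ]
  exact Nat.sInf_mem (exists_available hf hi)

lemma visit_le {n : ℕ} {f : ℕ → ℕ} (hf : IsCayleyTree n f) {i : ℕ} (hi : i ≤ n) :
    visit n f i ≤ n := by
  rcases i with _ | i
  · rw [visit_zero]; omega
  · exact (visit_succ_spec hf hi).2.1

lemma visit_injOn {n : ℕ} {f : ℕ → ℕ} (hf : IsCayleyTree n f) {i j : ℕ} (hi : i ≤ n) (hj : j ≤ n)
    (h : visit n f i = visit n f j) : i = j := by
  have key : ∀ i j, i < j → j ≤ n → visit n f i ≠ visit n f j := by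
    intro i j hij hj h
    obtain ⟨j, rfl⟩ : ∃ k, j = k + 1 := ⟨j - 1, by omega⟩
    exact (visit_succ_spec hf hj).2.2.1 ((mem_wearyList ..).2 ⟨i, by omega, h⟩)
  rcases lt_trichotomy i j with hcmp | hcmp | hcmp
  · exact absurd h (key i j hcmp hj)
  · exact hcmp
  · exact absurd h.symm (key j i hcmp hi)

/-! ### Visiting times -/

lemma exists_visit {n : ℕ} {f : ℕ → ℕ} (hf : IsCayleyTree n f) {v : ℕ} (hv : v ≤ n) :
    ∃ i ≤ n, visit n f i = v := by
  have := Finset.surj_on_of_inj_on_of_card_le (s := Finset.range (n + 1))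
    (t := Finset.range (n + 1)) (fun i _ => visit n f i)
    (fun i hi => by
      have := visit_le hf (Finset.mem_range_succ_iff.1 hi)
      exact Finset.mem_range_succ_iff.2 this)
    (fun i j hi hj h => visit_injOn hf (Finset.mem_range_succ_iff.1 hi)
      (Finset.mem_range_succ_iff.1 hj) h) le_rfl v (Finset.mem_range_succ_iff.2 hv)
  obtain ⟨i, hi, h⟩ := this
  exact ⟨i, Finset.mem_range_succ_iff.1 hi, h.symm⟩

lemma wearyInv_visit {n : ℕ} {f : ℕ → ℕ} (hf : IsCayleyTree n f) {i : ℕ} (hi : i ≤ n) :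
    wearyInv n f (visit n f i) = i := by
  have hmem : i ∈ {j | weary n f j = visit n f i} := weary_eq_visit hi
  have hle : wearyInv n f (visit n f i) ≤ i := Nat.sInf_le hmem
  have h := Nat.sInf_mem ⟨i, hmem⟩
  change weary n f (wearyInv n f (visit n f i)) = visit n f i at h
  rw [weary_eq_visit (hle.trans hi)] at h
  exact visit_injOn hf (hle.trans hi) hi h

lemma wearyInv_le {n : ℕ} {f : ℕ → ℕ} (hf : IsCayleyTree n f) {v : ℕ} (hv : v ≤ n) :
    wearyInv n f v ≤ n := by
  obtain ⟨i, hi, rfl⟩ := exists_visit hf hv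
  rwa [wearyInv_visit hf hi]

lemma visit_wearyInv {n : ℕ} {f : ℕ → ℕ} (hf : IsCayleyTree n f) {v : ℕ} (hv : v ≤ n) :
    visit n f (wearyInv n f v) = v := by
  obtain ⟨i, hi, rfl⟩ := exists_visit hf hv
  rw [wearyInv_visit hf hi]

lemma wearyInv_pos {n : ℕ} {f : ℕ → ℕ} (hf : IsCayleyTree n f) {v : ℕ} (hv1 : 1 ≤ v)
    (hv : v ≤ n) : 1 ≤ wearyInv n f v := by
  by_contra h
  have := visit_wearyInv hf hv
  rw [show wearyInv n f v = 0 by omega, visit_zero] at this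
  omega

/-- A vertex is visited after its parent. -/
lemma wearyInv_parent_lt {n : ℕ} {f : ℕ → ℕ} (hf : IsCayleyTree n f) {v : ℕ} (hv1 : 1 ≤ v)
    (hv : v ≤ n) : wearyInv n f (f v) < wearyInv n f v := by
  have h1 := wearyInv_pos hf hv1 hv
  have hn := wearyInv_le hf hv
  obtain ⟨i, hi⟩ : ∃ i, wearyInv n f v = i + 1 := ⟨wearyInv n f v - 1, by omega⟩
  have hs := (visit_succ_spec hf (i := i) (by omega)).2.2.2
  rw [← hi, visit_wearyInv hf hv, mem_wearyList] at hs
  obtain ⟨j, hj, h⟩ := hs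
  rw [← h, wearyInv_visit hf (by omega)]
  omega

/-- A vertex visited strictly between the parent of `c` and `c` itself is smaller than `c`, since `c`
was available at that moment. -/
lemma visit_lt_of_between {n : ℕ} {f : ℕ → ℕ} (hf : IsCayleyTree n f) {c s : ℕ} (hc1 : 1 ≤ c)
    (hc : c ≤ n) (hs1 : wearyInv n f (f c) < s) (hs2 : s < wearyInv n f c) :
    visit n f s < c := by
  have hn := wearyInv_le hf hc
  obtain ⟨i, rfl⟩ : ∃ i, s = i + 1 := ⟨s - 1, by omega⟩
  have hle : visit n f (i + 1) ≤ c := by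
    rw [visit_succ]
    refine Nat.sInf_le ⟨hc1, hc, ?_, ?_⟩
    · rw [mem_wearyList]
      rintro ⟨j, hj, rfl⟩
      rw [wearyInv_visit hf (by omega)] at hs2
      omega
    · exact (mem_wearyList ..).2
        ⟨wearyInv n f (f c), by omega, visit_wearyInv hf (hf.2.2.1 c hc1 hc)⟩
  refine lt_of_le_of_ne hle ?_
  rintro rfl
  rw [wearyInv_visit hf (by omega)] at hs2
  omega

/-! ### The parking process -/

lemma length_spotList (π : ℕ → ℕ) (c : ℕ) : (spotList π c).length = c := by
  induction c with
  | zero => simp [spotList]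
  | succ c ih => simp [spotList, ih]

lemma spot_succ (π : ℕ → ℕ) (c : ℕ) :
    spot π (c + 1) = sInf {s | π (c + 1) ≤ s ∧ s ∉ spotList π c} := by
  rw [spot, spotList, List.getD_append_right]
  · simp [length_spotList]
  · rw [length_spotList]; omega

lemma mem_spotList (π : ℕ → ℕ) (c s : ℕ) :
    s ∈ spotList π c ↔ ∃ d, 1 ≤ d ∧ d ≤ c ∧ spot π d = s := by
  induction c with
  | zero =>
    simp only [spotList, List.not_mem_nil, false_iff]
    rintro ⟨d, h1, h2, -⟩
    omega
  | succ c ih =>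
    rw [spotList, List.mem_append, ih, List.mem_singleton, ← spot_succ]
    constructor
    · rintro (⟨d, h1, hd, h⟩ | h)
      · exact ⟨d, h1, by omega, h⟩
      · exact ⟨c + 1, by omega, le_rfl, h.symm⟩
    · rintro ⟨d, h1, hd, h⟩
      rcases Nat.lt_or_ge c d with hcmp | hcmp
      · obtain rfl : d = c + 1 := by omega
        exact Or.inr h.symm
      · exact Or.inl ⟨d, h1, hcmp, h⟩

/-- Car `c` of the preference sequence parks at the spot numbered by the visiting time of the
vertex `c`. -/
lemma spot_pref {n : ℕ} {f : ℕ → ℕ} (hf : IsCayleyTree n f) (c : ℕ) (hc1 : 1 ≤ c) (hc : c ≤ n) :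
    spot (pref n f) c = wearyInv n f c := by
  induction c using Nat.strong_induction_on with
  | _ c ih =>
  obtain ⟨d, rfl⟩ : ∃ d, c = d + 1 := ⟨c - 1, by omega⟩
  have hmem : ∀ s, s ∈ spotList (pref n f) d ↔ ∃ e, 1 ≤ e ∧ e ≤ d ∧ wearyInv n f e = s := by
    intro s
    rw [mem_spotList]
    constructor <;> rintro ⟨e, h1, h2, h⟩ <;> refine ⟨e, h1, h2, ?_⟩
    · rwa [ih e (by omega) h1 (by omega)] at h
    · rwa [ih e (by omega) h1 (by omega)]
  rw [spot_succ]
  refine IsLeast.csInf_eq ⟨⟨wearyInv_parent_lt hf hc1 hc, ?_⟩, ?_⟩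
  · rw [hmem]
    rintro ⟨e, h1, h2, h⟩
    have := congrArg (visit n f) h
    rw [visit_wearyInv hf (by omega), visit_wearyInv hf hc] at this
    omega
  · rintro s ⟨hs1, hs2⟩
    by_contra hlt
    have hlt : s < wearyInv n f (d + 1) := not_le.1 hlt
    have hs1 : wearyInv n f (f (d + 1)) < s := hs1
    have hn := wearyInv_le hf hc
    have hv := visit_lt_of_between hf hc1 hc hs1 hlt
    have hpos : 1 ≤ visit n f s := by
      obtain ⟨i, rfl⟩ : ∃ i, s = i + 1 := ⟨s - 1, by omega⟩
      exact (visit_succ_spec hf (by omega)).1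
    exact hs2 ((hmem s).2 ⟨visit n f s, hpos, by omega, wearyInv_visit hf (by omega)⟩)

/-! ### Reindexing by vertices -/

lemma prioParent_wearyInv {n : ℕ} {f : ℕ → ℕ} (hf : IsCayleyTree n f) {c : ℕ} (hc : c ≤ n) :
    prioParent n f (wearyInv n f c) = wearyInv n f (f c) := by
  rw [prioParent, weary_eq_visit (wearyInv_le hf hc), visit_wearyInv hf hc]

/-- Sums over times can be reindexed as sums over vertices. -/
lemma sum_reindex {n : ℕ} {f : ℕ → ℕ} (hf : IsCayleyTree n f) (g : ℕ → ℕ) :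
    ∑ i ∈ Finset.Icc 1 n, g i = ∑ c ∈ Finset.Icc 1 n, g (wearyInv n f c) := by
  symm
  refine Finset.sum_bij' (fun c _ => wearyInv n f c) (fun i _ => visit n f i) ?_ ?_ ?_ ?_ ?_
  · intro c hc
    rw [Finset.mem_Icc] at hc ⊢
    exact ⟨wearyInv_pos hf hc.1 hc.2, wearyInv_le hf hc.2⟩
  · intro i hi
    rw [Finset.mem_Icc] at hi ⊢
    obtain ⟨j, rfl⟩ : ∃ j, i = j + 1 := ⟨i - 1, by omega⟩
    have h := visit_succ_spec hf (i := j) (by omega)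
    exact ⟨h.1, h.2.1⟩
  · intro c hc
    exact visit_wearyInv hf (Finset.mem_Icc.1 hc).2
  · intro i hi
    exact wearyInv_visit hf (Finset.mem_Icc.1 hi).2
  · intro c _
    rfl

/-- For every Cayley tree `T`: `wait(T) = probes(π_T)` and
`psa(T) = lucky(π_T)`. -/
theorem stmt15 (n : ℕ) (f : ℕ → ℕ) (hf : IsCayleyTree n f) :
    wait n f = probes n (pref n f) ∧ psa n f = lucky n (pref n f) := by
  constructor
  · have hn (g : ℕ → ℕ) : n + ∑ c ∈ Finset.Icc 1 n, g c = ∑ c ∈ Finset.Icc 1 n, (1 + g c) := by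
      simp [Finset.sum_add_distrib]
    rw [wait, probes, sum_reindex hf, hn]
    refine Finset.sum_congr rfl fun c hc => ?_
    rw [Finset.mem_Icc] at hc
    have hlt := wearyInv_parent_lt hf hc.1 hc.2
    rw [prioParent_wearyInv hf hc.2, spot_pref hf c hc.1 hc.2, pref]
    omega
  · rw [psa, lucky, Finset.card_filter, Finset.card_filter, sum_reindex hf]
    refine Finset.sum_congr rfl fun c hc => ?_
    rw [Finset.mem_Icc] at hc
    have hlt := wearyInv_parent_lt hf hc.1 hc.2
    rw [prioParent_wearyInv hf hc.2, spot_pref hf c hc.1 hc.2, pref]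
    refine if_congr ?_ rfl rfl
    omega

end WearyParking
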